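/- arXiv:2512.19605 — 3 statements merged into one kernel-verified Lean document; each statement's English description precedes it below -/
import Mathlib

section
/- Let P be a probability measure on ℝ^d, let γ, σ > 0, and let G = N(0, σ² I_d) be the centered isotropic Gaussian measure on ℝ^d. Then MMD²_{k_γ}(P, G) = E_{x,x'~P⊗P}[e^{−γ‖x−x'‖²}] − 2(1 + 2γσ²)^{−d/2} E_{x~P}[exp(−γ‖x‖²/(1 + 2γσ²))] + (1 + 4γσ²)^{−d/2}, where MMD²_{k_γ} denotes the squared maximum mean discrepancy in expanded form with the Gaussian kernel k_γ(x,y) = exp(−γ‖x−y‖²). In particular, E_{y,y'~G⊗G}[e^{−γ‖y−y'‖²}] = (1 + 4γσ²)^{−d/2} and for every x ∈ ℝ^d, E_{y~G}[e^{−γ‖x−y‖²}] = (1 + 2γσ²)^{−d/2} exp(−γ‖x‖²/(1 + 2γσ²)). -/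
open MeasureTheory ProbabilityTheory Real

/-!
Multiplying the density of `N(m, v)` by `exp (-γ (x - y)²)` and completing the square is Bayes' rule
for a Gaussian prior and a Gaussian likelihood: up to a constant factor the product is the density
of `N((m + 2γvx) / s, v / s)` with `s = 1 + 2γv`, so it integrates to that factor, which is itself
`s ^ (-1/2)` times a Gaussian kernel between `x` and `m`, of bandwidth `γ / s`. Kernel and measure
are products over the coordinates, hence the same holds in dimension `d` with `s ^ (-d/2)`.

Because the integral is again a Gaussian kernel, a second integration against `N(m', w)` is the
same computation with bandwidth `γ / s`, and `s (1 + 2 (γ / s) w) = 1 + 2γ (v + w)`.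
-/

open scoped NNReal

section OneDimensional

variable {γ : ℝ} {v : ℝ≥0}

lemma gaussianPDFReal_mul_exp_neg_mul_sub_sq (hv : v ≠ 0) (hs : 0 < 1 + 2 * γ * v) (m x y : ℝ) :
    gaussianPDFReal m v y * exp (-γ * (x - y) ^ 2)
      = (1 + 2 * γ * v) ^ (-1 / 2 : ℝ) * exp (-(γ / (1 + 2 * γ * v)) * (x - m) ^ 2)
        * gaussianPDFReal ((m + 2 * γ * v * x) / (1 + 2 * γ * v))
            (v / (1 + 2 * γ * v).toNNReal) y := by
  simp only [gaussianPDFReal, NNReal.coe_div, coe_toNNReal _ hs.le]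
  set s : ℝ := 1 + 2 * γ * v with hs_def
  have normalization : (√(2 * π * v))⁻¹ = s ^ (-1 / 2 : ℝ) * (√(2 * π * (v / s)))⁻¹ := by
    rw [neg_div, rpow_neg hs.le, ← sqrt_eq_rpow, ← mul_inv, ← sqrt_mul hs.le]
    congr 2
    field_simp
  have complete_square : -(y - m) ^ 2 / (2 * v) + -γ * (x - y) ^ 2
      = -(γ / s) * (x - m) ^ 2 + -(y - (m + 2 * γ * v * x) / s) ^ 2 / (2 * (v / s)) := by
    field_simp
    rw [hs_def]
    ring
  rw [normalization, mul_assoc, ← exp_add, complete_square, exp_add]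
  ring

lemma integral_exp_neg_mul_sub_sq_gaussianReal (hs : 0 < 1 + 2 * γ * v) (m x : ℝ) :
    ∫ y, exp (-γ * (x - y) ^ 2) ∂gaussianReal m v
      = (1 + 2 * γ * v) ^ (-1 / 2 : ℝ) * exp (-(γ / (1 + 2 * γ * v)) * (x - m) ^ 2) := by
  obtain rfl | hv := eq_or_ne v 0
  · simp
  have hv' : v / (1 + 2 * γ * v).toNNReal ≠ 0 := div_ne_zero hv (toNNReal_pos.mpr hs).ne'
  simp_rw [integral_gaussianReal_eq_integral_smul hv, smul_eq_mul,
    gaussianPDFReal_mul_exp_neg_mul_sub_sq hv hs, integral_const_mul,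
    integral_gaussianPDFReal_eq_one _ hv', mul_one]

end OneDimensional

/-- The squared maximum mean discrepancy `MMD²_k(P, Q)` in expanded form. The integrals are Bochner
integrals, with value `0` where the integrand is not integrable. -/
noncomputable def mmdSq {α : Type*} [MeasurableSpace α] (k : α → α → ℝ) (P Q : Measure α) : ℝ :=
  (∫ x, ∫ x', k x x' ∂P ∂P) + (∫ y, ∫ y', k y y' ∂Q ∂Q) - 2 * ∫ x, ∫ y, k x y ∂Q ∂P

section Multidimensional

variable {ι : Type*} [Fintype ι]

/-- The Gaussian kernel `k_γ(x, y) = exp (-γ ‖x - y‖²)`. The Euclidean norm is written as a sum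
since `ι → ℝ` carries the supremum norm. -/
noncomputable def gaussianKernel (γ : ℝ) (x y : ι → ℝ) : ℝ :=
  exp (-γ * ∑ i, (x i - y i) ^ 2)

/-- The isotropic Gaussian measure `N(m, v I)` on `ι → ℝ`, as a product of real Gaussians; `v` is
the variance of each coordinate. -/
noncomputable def isotropicGaussian (m : ι → ℝ) (v : ℝ≥0) : Measure (ι → ℝ) :=
  Measure.pi fun i => gaussianReal (m i) v

lemma gaussianKernel_eq_prod (γ : ℝ) (x y : ι → ℝ) :
    gaussianKernel γ x y = ∏ i, exp (-γ * (x i - y i) ^ 2) := by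
  rw [gaussianKernel, Finset.mul_sum, exp_sum]

lemma gaussianKernel_comm (γ : ℝ) (x y : ι → ℝ) : gaussianKernel γ x y = gaussianKernel γ y x := by
  simp only [gaussianKernel, sub_sq_comm]

lemma gaussianKernel_self (γ : ℝ) (x : ι → ℝ) : gaussianKernel γ x x = 1 := by
  simp [gaussianKernel]

variable {γ : ℝ} {v w : ℝ≥0}

lemma integral_gaussianKernel_isotropicGaussian (hs : 0 < 1 + 2 * γ * v) (m x : ι → ℝ) :
    ∫ y, gaussianKernel γ x y ∂isotropicGaussian m v
      = (1 + 2 * γ * v) ^ (-(Fintype.card ι : ℝ) / 2)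
        * gaussianKernel (γ / (1 + 2 * γ * v)) x m := by
  have prod_const : ∏ _i : ι, (1 + 2 * γ * v) ^ (-1 / 2 : ℝ)
      = (1 + 2 * γ * v) ^ (-(Fintype.card ι : ℝ) / 2) := by
    rw [Finset.prod_const, Finset.card_univ, ← rpow_mul_natCast hs.le]
    ring_nf
  simp_rw [gaussianKernel_eq_prod, isotropicGaussian]
  rw [integral_fintype_prod_eq_prod (fun i y => exp (-γ * (x i - y) ^ 2))]
  simp_rw [integral_exp_neg_mul_sub_sq_gaussianReal hs]
  rw [Finset.prod_mul_distrib, prod_const]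

lemma integral_integral_gaussianKernel_isotropicGaussian
    (h : 0 < 1 + 2 * γ * (v + w)) (m m' : ι → ℝ) :
    ∫ x, ∫ y, gaussianKernel γ x y ∂isotropicGaussian m v ∂isotropicGaussian m' w
      = (1 + 2 * γ * (v + w)) ^ (-(Fintype.card ι : ℝ) / 2)
        * gaussianKernel (γ / (1 + 2 * γ * (v + w))) m m' := by
  have hs : 0 < 1 + 2 * γ * v := by
    obtain hγ | hγ := le_total 0 γ
    · positivity
    · nlinarith [mul_nonpos_of_nonpos_of_nonneg hγ w.coe_nonneg]
  have bandwidth_step : 1 + 2 * (γ / (1 + 2 * γ * v)) * w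
      = (1 + 2 * γ * (v + w)) / (1 + 2 * γ * v) := by
    field_simp
    ring
  have hs' : 0 < 1 + 2 * (γ / (1 + 2 * γ * v)) * w := bandwidth_step ▸ div_pos h hs
  simp_rw [integral_gaussianKernel_isotropicGaussian hs, integral_const_mul,
    gaussianKernel_comm _ _ m, integral_gaussianKernel_isotropicGaussian hs', bandwidth_step]
  rw [← mul_assoc, ← mul_rpow hs.le (by positivity), mul_div_cancel₀ _ hs.ne',
    div_div_div_cancel_right₀ hs.ne']

lemma integral_integral_gaussianKernel_isotropicGaussian_self
    (h : 0 < 1 + 4 * γ * v) (m : ι → ℝ) :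
    ∫ y, ∫ y', gaussianKernel γ y y' ∂isotropicGaussian m v ∂isotropicGaussian m v
      = (1 + 4 * γ * v) ^ (-(Fintype.card ι : ℝ) / 2) := by
  have two_variances : 1 + 2 * γ * (v + v) = 1 + 4 * γ * v := by ring
  rw [integral_integral_gaussianKernel_isotropicGaussian (two_variances ▸ h), two_variances,
    gaussianKernel_self, mul_one]

theorem mmd_gaussian_prior_closed_form_general (P : Measure (ι → ℝ)) (m : ι → ℝ)
    (h : 0 < 1 + 4 * γ * v) :
    mmdSq (gaussianKernel γ) P (isotropicGaussian m v)
        = (∫ x, ∫ x', gaussianKernel γ x x' ∂P ∂P)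
          - 2 * (1 + 2 * γ * v) ^ (-(Fintype.card ι : ℝ) / 2)
              * ∫ x, gaussianKernel (γ / (1 + 2 * γ * v)) x m ∂P
          + (1 + 4 * γ * v) ^ (-(Fintype.card ι : ℝ) / 2)
      ∧ ∫ y, ∫ y', gaussianKernel γ y y' ∂isotropicGaussian m v ∂isotropicGaussian m v
        = (1 + 4 * γ * v) ^ (-(Fintype.card ι : ℝ) / 2)
      ∧ ∀ x, ∫ y, gaussianKernel γ x y ∂isotropicGaussian m v
        = (1 + 2 * γ * v) ^ (-(Fintype.card ι : ℝ) / 2)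
          * gaussianKernel (γ / (1 + 2 * γ * v)) x m := by
  have self_term := integral_integral_gaussianKernel_isotropicGaussian_self h m
  have cross_term := integral_gaussianKernel_isotropicGaussian (γ := γ) (v := v) (by linarith) m
  refine ⟨?_, self_term, cross_term⟩
  simp_rw [mmdSq, self_term, cross_term, integral_const_mul]
  ring

end Multidimensional

/-- **Closed form of the Gaussian-kernel MMD to an isotropic Gaussian prior.**
For a probability measure `P` on `ℝ^d` and `G = N(0, σ²I_d)` (the `d`-fold product of
`N(0,σ²)`), the expanded-form squared MMD with kernel `k_γ(x,y) = exp(−γ‖x−y‖²)` equals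
`E_{P⊗P}[e^{−γ‖x−x'‖²}] − 2(1+2γσ²)^{−d/2} E_P[exp(−γ‖x‖²/(1+2γσ²))] + (1+4γσ²)^{−d/2}`;
in particular the `G⊗G` term equals `(1+4γσ²)^{−d/2}` and the cross term against `G` has the
stated closed form. Here `‖x‖² = ∑ i, (x i)²`. -/
theorem mmd_gaussian_prior_closed_form
    (d : ℕ) (P : Measure (Fin d → ℝ)) [IsProbabilityMeasure P] (γ σ : ℝ)
    (hγ : 0 < γ) (hσ : 0 < σ) :
    ((∫ x, ∫ x', Real.exp (-γ * ∑ i, (x i - x' i) ^ 2) ∂P ∂P)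
      + (∫ y, ∫ y', Real.exp (-γ * ∑ i, (y i - y' i) ^ 2)
          ∂(Measure.pi fun _ : Fin d => gaussianReal 0 ⟨σ ^ 2, sq_nonneg σ⟩)
          ∂(Measure.pi fun _ : Fin d => gaussianReal 0 ⟨σ ^ 2, sq_nonneg σ⟩))
      - 2 * ∫ x, ∫ y, Real.exp (-γ * ∑ i, (x i - y i) ^ 2)
          ∂(Measure.pi fun _ : Fin d => gaussianReal 0 ⟨σ ^ 2, sq_nonneg σ⟩) ∂P
      = (∫ x, ∫ x', Real.exp (-γ * ∑ i, (x i - x' i) ^ 2) ∂P ∂P)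
        - 2 * (1 + 2 * γ * σ ^ 2) ^ (-(d : ℝ) / 2)
            * ∫ x, Real.exp (-γ * (∑ i, x i ^ 2) / (1 + 2 * γ * σ ^ 2)) ∂P
        + (1 + 4 * γ * σ ^ 2) ^ (-(d : ℝ) / 2))
    ∧ ((∫ y, ∫ y', Real.exp (-γ * ∑ i, (y i - y' i) ^ 2)
          ∂(Measure.pi fun _ : Fin d => gaussianReal 0 ⟨σ ^ 2, sq_nonneg σ⟩)
          ∂(Measure.pi fun _ : Fin d => gaussianReal 0 ⟨σ ^ 2, sq_nonneg σ⟩))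
        = (1 + 4 * γ * σ ^ 2) ^ (-(d : ℝ) / 2))
    ∧ (∀ x : Fin d → ℝ,
        (∫ y, Real.exp (-γ * ∑ i, (x i - y i) ^ 2)
            ∂(Measure.pi fun _ : Fin d => gaussianReal 0 ⟨σ ^ 2, sq_nonneg σ⟩))
          = (1 + 2 * γ * σ ^ 2) ^ (-(d : ℝ) / 2)
            * Real.exp (-γ * (∑ i, x i ^ 2) / (1 + 2 * γ * σ ^ 2))) := by
  have general := mmd_gaussian_prior_closed_form_general (γ := γ)
    (v := .mk (σ ^ 2) (sq_nonneg σ)) P 0 (by positivity)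
  simp only [mmdSq, gaussianKernel, isotropicGaussian, NNReal.coe_mk, Fintype.card_fin,
    Pi.zero_apply, sub_zero, ← neg_div, div_mul_eq_mul_div] at general
  exact general
end

section
/- Let d ≥ 2, γ > 0, and let σ_{d−1} denote the surface measure on the unit sphere S^{d−1} ⊂ ℝ^d. Let x, x' ∈ ℝ^d with x ≠ x', set r = ‖x − x'‖ and e = (x − x')/‖x − x'‖. Then ∫_{S^{d−1}} (θ·x)(θ·x') exp(−γ (θ·(x − x'))²) dσ_{d−1}(θ) = (x·x' − (e·x)(e·x')) · (J₁(γr²) − J₂(γr²)) / (d − 1) + (e·x)(e·x') · J₂(γr²), where J₁(c) = ∫_{S^{d−1}} exp(−c θ₁²) dσ_{d−1}(θ) and J₂(c) = ∫_{S^{d−1}} θ₁² exp(−c θ₁²) dσ_{d−1}(θ). -/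
/-!
Weight the surface measure by a function of `⟪θ, e⟫`, where `e` is a unit vector. Its second moment
`B x y = ∫ ⟪θ, x⟫ ⟪θ, y⟫ f ⟪θ, e⟫` is a bilinear form invariant under all linear isometries fixing
`e`. Reflecting in `vᗮ` for `v ⟂ e` gives `B v w = 0` whenever `w ⟂ v`, and the reflections that
exchange two vectors of equal norm in `eᗮ` show that `B` is a multiple `a` of the inner product
there. Hence `B x y = a (⟪x, y⟫ - ⟪e, x⟫ ⟪e, y⟫) + B e e ⟪e, x⟫ ⟪e, y⟫`. Since `‖θ‖ = 1`, the trace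
of `B` is the total weight `∫ f ⟪θ, e⟫`, which determines `a`. A reflection carrying `e` to the
first basis vector identifies the total weight and `B e e` with `J₁` and `J₂`.
-/

open MeasureTheory Real

/-- The (unnormalized) surface measure on the unit sphere `S^{d−1} ⊂ ℝ^d`. -/
noncomputable def sphereSurfaceMeasure (d : ℕ) :
    Measure (Metric.sphere (0 : EuclideanSpace ℝ (Fin d)) 1) :=
  (volume : Measure (EuclideanSpace ℝ (Fin d))).toSphere

/-- `J₁(c) = ∫_{S^{d−1}} exp(−c θ₁²) dσ_{d−1}(θ)`. -/
noncomputable def J1 (d : ℕ) (hd : 2 ≤ d) (c : ℝ) : ℝ :=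
  ∫ θ : Metric.sphere (0 : EuclideanSpace ℝ (Fin d)) 1,
    Real.exp (-c * ((θ : EuclideanSpace ℝ (Fin d)) ⟨0, by omega⟩) ^ 2)
    ∂(sphereSurfaceMeasure d)

/-- `J₂(c) = ∫_{S^{d−1}} θ₁² exp(−c θ₁²) dσ_{d−1}(θ)`. -/
noncomputable def J2 (d : ℕ) (hd : 2 ≤ d) (c : ℝ) : ℝ :=
  ∫ θ : Metric.sphere (0 : EuclideanSpace ℝ (Fin d)) 1,
    ((θ : EuclideanSpace ℝ (Fin d)) ⟨0, by omega⟩) ^ 2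
      * Real.exp (-c * ((θ : EuclideanSpace ℝ (Fin d)) ⟨0, by omega⟩) ^ 2)
    ∂(sphereSurfaceMeasure d)

open Metric Module Submodule
open scoped RealInnerProductSpace

section AxisymmetricForm

variable {E : Type*} [NormedAddCommGroup E] [InnerProductSpace ℝ E]

lemma reflection_orthogonal_singleton_eq_self {v w : E} (hvw : ⟪v, w⟫ = 0) :
    (ℝ ∙ v)ᗮ.reflection w = w :=
  reflection_mem_subspace_eq_self (mem_orthogonal_singleton_iff_inner_right.2 hvw)

/-- The bilinear form `B` is symmetric about the axis `e`: it is invariant under every linear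
isometry that fixes `e`. -/
def IsAxisymmetric (B : LinearMap.BilinForm ℝ E) (e : E) : Prop :=
  ∀ R : E ≃ₗᵢ[ℝ] E, R e = e → ∀ x y, B (R x) (R y) = B x y

namespace IsAxisymmetric

variable {B : LinearMap.BilinForm ℝ E} {e : E}

lemma flip (hB : IsAxisymmetric B e) : IsAxisymmetric (LinearMap.BilinForm.flip B) e := by
  intro R hR x y
  simpa using hB R hR y x

lemma apply_eq_zero_of_inner_eq_zero (hB : IsAxisymmetric B e) {v w : E} (hve : ⟪v, e⟫ = 0)
    (hvw : ⟪v, w⟫ = 0) : B v w = 0 := by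
  have h := hB (ℝ ∙ v)ᗮ.reflection (reflection_orthogonal_singleton_eq_self hve) v w
  rw [reflection_orthogonalComplement_singleton_eq_neg,
    reflection_orthogonal_singleton_eq_self hvw, map_neg, LinearMap.neg_apply] at h
  linarith

lemma apply_self_eq_of_norm_eq (hB : IsAxisymmetric B e) {v w : E} (hve : ⟪v, e⟫ = 0)
    (hwe : ⟪w, e⟫ = 0) (hvw : ‖v‖ = ‖w‖) : B v v = B w w := by
  have he : ⟪v - w, e⟫ = 0 := by rw [inner_sub_left, hve, hwe, sub_zero]
  have h := hB (ℝ ∙ (v - w))ᗮ.reflection (reflection_orthogonal_singleton_eq_self he) v v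
  rw [reflection_sub hvw] at h
  exact h.symm

lemma exists_apply_self_eq_mul_norm_sq (hB : IsAxisymmetric B e) :
    ∃ a, ∀ v, ⟪v, e⟫ = 0 → B v v = a * ‖v‖ ^ 2 := by
  by_cases h : ∃ u : E, ⟪u, e⟫ = 0 ∧ u ≠ 0
  · obtain ⟨u, hue, hu⟩ := h
    have hu' : ‖u‖ ≠ 0 := norm_ne_zero_iff.2 hu
    refine ⟨B u u / ‖u‖ ^ 2, fun v hve ↦ ?_⟩
    have hnorm : ‖v‖ = ‖(‖v‖ / ‖u‖) • u‖ := by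
      rw [norm_smul, norm_div, norm_norm, norm_norm, div_mul_cancel₀ _ hu']
    have horth : ⟪(‖v‖ / ‖u‖) • u, e⟫ = 0 := by rw [real_inner_smul_left, hue, mul_zero]
    rw [hB.apply_self_eq_of_norm_eq hve horth hnorm]
    simp only [map_smul, LinearMap.smul_apply, smul_eq_mul]
    ring
  · push Not at h
    exact ⟨0, fun v hve ↦ by simp [h v hve]⟩

lemma exists_apply_eq_mul_inner (hB : IsAxisymmetric B e) :
    ∃ a, ∀ v w, ⟪v, e⟫ = 0 → B v w = a * ⟪v, w⟫ := by
  obtain ⟨a, ha⟩ := hB.exists_apply_self_eq_mul_norm_sq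
  refine ⟨a, fun v w hve ↦ ?_⟩
  rcases eq_or_ne v 0 with rfl | hv
  · simp
  have hv' : ‖v‖ ≠ 0 := norm_ne_zero_iff.2 hv
  set t := ⟪v, w⟫ / ‖v‖ ^ 2 with ht
  have horth : ⟪v, w - t • v⟫ = 0 := by
    rw [inner_sub_right, real_inner_smul_right, real_inner_self_eq_norm_sq, ht]
    field_simp
    ring
  calc B v w = t * B v v + B v (w - t • v) := by simp
    _ = a * ⟪v, w⟫ := by
      rw [hB.apply_eq_zero_of_inner_eq_zero hve horth, ha v hve, ht]
      field_simp
      ring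

lemma exists_apply_eq_inner_add_axis (hB : IsAxisymmetric B e) (he : ‖e‖ = 1) :
    ∃ a, ∀ x y, B x y = a * (⟪x, y⟫ - ⟪e, x⟫ * ⟪e, y⟫) + B e e * (⟪e, x⟫ * ⟪e, y⟫) := by
  obtain ⟨a, ha⟩ := hB.exists_apply_eq_mul_inner
  refine ⟨a, fun x y ↦ ?_⟩
  have horth (z : E) : ⟪z - ⟪e, z⟫ • e, e⟫ = 0 := by
    rw [inner_sub_left, real_inner_smul_left, inner_self_eq_one_of_norm_eq_one he,
      real_inner_comm, mul_one, sub_self]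
  have haxis : B e (y - ⟪e, y⟫ • e) = 0 :=
    hB.flip.apply_eq_zero_of_inner_eq_zero (horth y) (horth y)
  calc B x y = B (x - ⟪e, x⟫ • e) y + ⟪e, x⟫ * (B e (y - ⟪e, y⟫ • e) + ⟪e, y⟫ * B e e) := by simp
    _ = a * ⟪x - ⟪e, x⟫ • e, y⟫ + ⟪e, x⟫ * (⟪e, y⟫ * B e e) := by
      rw [ha _ _ (horth x), haxis, zero_add]
    _ = a * (⟪x, y⟫ - ⟪e, x⟫ * ⟪e, y⟫) + B e e * (⟪e, x⟫ * ⟪e, y⟫) := by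
      rw [inner_sub_left, real_inner_smul_left]
      ring

theorem apply_eq_sum_orthonormalBasis {ι : Type*} [Fintype ι] (hB : IsAxisymmetric B e)
    (he : ‖e‖ = 1) (b : OrthonormalBasis ι ℝ E) (hι : 1 < Fintype.card ι) (x y : E) :
    B x y = (⟪x, y⟫ - ⟪e, x⟫ * ⟪e, y⟫) * ((∑ i, B (b i) (b i) - B e e) / (Fintype.card ι - 1))
      + ⟪e, x⟫ * ⟪e, y⟫ * B e e := by
  obtain ⟨a, ha⟩ := hB.exists_apply_eq_inner_add_axis he
  have htrace : ∑ i, B (b i) (b i) = a * (Fintype.card ι - 1) + B e e := by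
    have hsum : ∑ i, ⟪e, b i⟫ * ⟪e, b i⟫ = 1 := by
      simpa only [sq, he, one_mul] using b.sum_sq_inner_left e
    simp_rw [fun i ↦ ha (b i) (b i)]
    rw [Finset.sum_add_distrib, ← Finset.mul_sum, ← Finset.mul_sum, Finset.sum_sub_distrib, hsum]
    simp
  have hcard : (Fintype.card ι - 1 : ℝ) ≠ 0 := sub_ne_zero.2 (by exact_mod_cast hι.ne')
  rw [htrace, add_sub_cancel_right, mul_div_cancel_right₀ _ hcard, ha x y]
  ring

end IsAxisymmetric

end AxisymmetricForm

section SphereIsometry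

variable {E F : Type*} [NormedAddCommGroup E] [NormedSpace ℝ E] [NormedAddCommGroup F]
  [NormedSpace ℝ F]

/-- The homeomorphism between unit spheres induced by a linear isometry. -/
def unitSphereHomeomorph (R : E ≃ₗᵢ[ℝ] F) : sphere (0 : E) 1 ≃ₜ sphere (0 : F) 1 :=
  R.toHomeomorph.subtype fun x ↦ by simp

@[simp]
lemma coe_unitSphereHomeomorph (R : E ≃ₗᵢ[ℝ] F) (θ : sphere (0 : E) 1) :
    (unitSphereHomeomorph R θ : F) = R θ :=
  rfl

open scoped Pointwise in
lemma smul_image_preimage_unitSphereHomeomorph (R : E ≃ₗᵢ[ℝ] F) (I : Set ℝ)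
    (s : Set (sphere (0 : F) 1)) :
    I • ((↑) '' (unitSphereHomeomorph R ⁻¹' s) : Set E) = R ⁻¹' (I • ((↑) '' s)) := by
  ext v
  simp only [Set.mem_preimage, Set.mem_smul, Set.mem_image]
  constructor
  · rintro ⟨t, ht, _, ⟨θ, hθ, rfl⟩, rfl⟩
    exact ⟨t, ht, _, ⟨_, hθ, rfl⟩, by simp⟩
  · rintro ⟨t, ht, _, ⟨θ, hθ, rfl⟩, h⟩
    refine ⟨t, ht, _, ⟨(unitSphereHomeomorph R).symm θ, by simpa using hθ, rfl⟩, R.injective ?_⟩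
    rw [map_smul, ← coe_unitSphereHomeomorph, Homeomorph.apply_symm_apply, h]

lemma measurePreserving_unitSphereHomeomorph [MeasurableSpace E] [BorelSpace E]
    [MeasurableSpace F] [BorelSpace F] {μ : Measure E} {ν : Measure F} {R : E ≃ₗᵢ[ℝ] F}
    (hR : MeasurePreserving R μ ν) :
    MeasurePreserving (unitSphereHomeomorph R) μ.toSphere ν.toSphere := by
  have hmeas : Measurable (unitSphereHomeomorph R) := (unitSphereHomeomorph R).continuous.measurable
  refine ⟨hmeas, Measure.ext fun s hs ↦ ?_⟩
  rw [Measure.map_apply hmeas hs, Measure.toSphere_apply' _ (hmeas hs),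
    Measure.toSphere_apply' _ hs, smul_image_preimage_unitSphereHomeomorph,
    R.toLinearEquiv.finrank_eq, hR.measure_preimage_emb R.toHomeomorph.measurableEmbedding]

end SphereIsometry

section SphereMoment

variable {E : Type*} [NormedAddCommGroup E] [InnerProductSpace ℝ E] [MeasurableSpace E]
  [BorelSpace E]

lemma integrable_inner_mul_inner_mul {μ : Measure (sphere (0 : E) 1)} {w : sphere (0 : E) 1 → ℝ}
    (hw : Integrable w μ) (x y : E) :
    Integrable (fun θ : sphere (0 : E) 1 ↦ ⟪(θ : E), x⟫ * ⟪(θ : E), y⟫ * w θ) μ := by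
  refine hw.bdd_mul (c := ‖x‖ * ‖y‖) (by fun_prop) (.of_forall fun θ ↦ ?_)
  have hθ (z : E) : ‖⟪(θ : E), z⟫‖ ≤ ‖z‖ := by simpa using norm_inner_le_norm (𝕜 := ℝ) (θ : E) z
  rw [norm_mul]
  gcongr <;> exact hθ _

variable [FiniteDimensional ℝ E]

lemma integral_toSphere_comp_linearIsometryEquiv {G : Type*} [NormedAddCommGroup G]
    [NormedSpace ℝ G] (R : E ≃ₗᵢ[ℝ] E) (g : E → G) :
    ∫ θ : sphere (0 : E) 1, g (R θ) ∂volume.toSphere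
      = ∫ θ : sphere (0 : E) 1, g θ ∂volume.toSphere :=
  (measurePreserving_unitSphereHomeomorph R.measurePreserving).integral_comp
    (unitSphereHomeomorph R).measurableEmbedding fun θ ↦ g θ

lemma integral_toSphere_comp_inner_eq_of_norm_eq {G : Type*} [NormedAddCommGroup G]
    [NormedSpace ℝ G] {u v : E} (huv : ‖u‖ = ‖v‖) (g : ℝ → G) :
    ∫ θ : sphere (0 : E) 1, g ⟪(θ : E), u⟫ ∂volume.toSphere
      = ∫ θ : sphere (0 : E) 1, g ⟪(θ : E), v⟫ ∂volume.toSphere := by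
  rw [← integral_toSphere_comp_linearIsometryEquiv (ℝ ∙ (u - v))ᗮ.reflection fun θ ↦ g ⟪θ, v⟫]
  congr 1 with θ
  rw [← LinearIsometryEquiv.inner_map_map (ℝ ∙ (u - v))ᗮ.reflection, reflection_sub huv]

/-- The second moment `(x, y) ↦ ∫ ⟪θ, x⟫ ⟪θ, y⟫ w θ dσ(θ)` of the surface measure on the unit
sphere with an integrable weight `w`. -/
noncomputable def sphereMoment {w : sphere (0 : E) 1 → ℝ} (hw : Integrable w volume.toSphere) :
    LinearMap.BilinForm ℝ E :=
  have hint := integrable_inner_mul_inner_mul hw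
  LinearMap.mk₂ ℝ
    (fun x y ↦ ∫ θ : sphere (0 : E) 1, ⟪(θ : E), x⟫ * ⟪(θ : E), y⟫ * w θ ∂volume.toSphere)
    (fun x x' y ↦ by simp only [inner_add_right, add_mul, integral_add (hint x y) (hint x' y)])
    (fun c x y ↦ by simp only [real_inner_smul_right, mul_assoc, integral_const_mul, smul_eq_mul])
    (fun x y y' ↦ by
      simp only [inner_add_right, mul_add, add_mul, integral_add (hint x y) (hint x y')])
    (fun c x y ↦ by
      simp only [real_inner_smul_right, mul_left_comm _ c, mul_assoc, integral_const_mul,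
        smul_eq_mul])

lemma sphereMoment_apply {w : sphere (0 : E) 1 → ℝ} (hw : Integrable w volume.toSphere) (x y : E) :
    sphereMoment hw x y
      = ∫ θ : sphere (0 : E) 1, ⟪(θ : E), x⟫ * ⟪(θ : E), y⟫ * w θ ∂volume.toSphere :=
  rfl

lemma sum_sphereMoment_orthonormalBasis {ι : Type*} [Fintype ι] {w : sphere (0 : E) 1 → ℝ}
    (hw : Integrable w volume.toSphere) (b : OrthonormalBasis ι ℝ E) :
    ∑ i, sphereMoment hw (b i) (b i) = ∫ θ, w θ ∂volume.toSphere := by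
  simp only [sphereMoment_apply]
  rw [← integral_finsetSum _ fun i _ ↦ integrable_inner_mul_inner_mul hw (b i) (b i)]
  congr 1 with θ
  have hθ : ∑ i, ⟪(θ : E), b i⟫ * ⟪(θ : E), b i⟫ = 1 := by
    simpa [← sq] using b.sum_sq_inner_left (θ : E)
  rw [← Finset.sum_mul, hθ, one_mul]

lemma isAxisymmetric_sphereMoment {e : E} {f : ℝ → ℝ}
    (hf : Integrable (fun θ : sphere (0 : E) 1 ↦ f ⟪(θ : E), e⟫) volume.toSphere) :
    IsAxisymmetric (sphereMoment hf) e := by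
  intro R hR x y
  rw [sphereMoment_apply, sphereMoment_apply, ← integral_toSphere_comp_linearIsometryEquiv R
    fun θ ↦ ⟪θ, R x⟫ * ⟪θ, R y⟫ * f ⟪θ, e⟫]
  nth_rw 1 [← hR]
  simp only [LinearIsometryEquiv.inner_map_map]

theorem integral_toSphere_inner_mul_inner_mul_comp_inner (hE : 1 < finrank ℝ E) {e : E}
    (he : ‖e‖ = 1) {f : ℝ → ℝ}
    (hf : Integrable (fun θ : sphere (0 : E) 1 ↦ f ⟪(θ : E), e⟫) volume.toSphere) (x y : E) :
    ∫ θ : sphere (0 : E) 1, ⟪(θ : E), x⟫ * ⟪(θ : E), y⟫ * f ⟪(θ : E), e⟫ ∂volume.toSphere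
      = (⟪x, y⟫ - ⟪e, x⟫ * ⟪e, y⟫)
          * ((∫ θ : sphere (0 : E) 1, f ⟪(θ : E), e⟫ ∂volume.toSphere
            - ∫ θ : sphere (0 : E) 1, ⟪(θ : E), e⟫ ^ 2 * f ⟪(θ : E), e⟫ ∂volume.toSphere)
              / (finrank ℝ E - 1))
        + ⟪e, x⟫ * ⟪e, y⟫
          * ∫ θ : sphere (0 : E) 1, ⟪(θ : E), e⟫ ^ 2 * f ⟪(θ : E), e⟫ ∂volume.toSphere := by
  have haxis : sphereMoment hf e e
      = ∫ θ : sphere (0 : E) 1, ⟪(θ : E), e⟫ ^ 2 * f ⟪(θ : E), e⟫ ∂volume.toSphere := by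
    simp only [sphereMoment_apply, sq]
  have h := (isAxisymmetric_sphereMoment hf).apply_eq_sum_orthonormalBasis he
    (stdOrthonormalBasis ℝ E) (by simpa using hE) x y
  rwa [sum_sphereMoment_orthonormalBasis, haxis, Fintype.card_fin] at h

theorem sphere_integral_projection_product_general (hE : 1 < finrank ℝ E) {v e : E} (hv : v ≠ 0)
    (he : ‖e‖ = 1) {f : ℝ → ℝ}
    (hf : Integrable (fun θ : sphere (0 : E) 1 ↦ f ⟪(θ : E), v⟫) volume.toSphere) (x y : E) :
    ∫ θ : sphere (0 : E) 1, ⟪(θ : E), x⟫ * ⟪(θ : E), y⟫ * f ⟪(θ : E), v⟫ ∂volume.toSphere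
      = (⟪x, y⟫ - ⟪‖v‖⁻¹ • v, x⟫ * ⟪‖v‖⁻¹ • v, y⟫)
          * ((∫ θ : sphere (0 : E) 1, f (‖v‖ * ⟪(θ : E), e⟫) ∂volume.toSphere
            - ∫ θ : sphere (0 : E) 1, ⟪(θ : E), e⟫ ^ 2 * f (‖v‖ * ⟪(θ : E), e⟫) ∂volume.toSphere)
              / (finrank ℝ E - 1))
        + ⟪‖v‖⁻¹ • v, x⟫ * ⟪‖v‖⁻¹ • v, y⟫
          * ∫ θ : sphere (0 : E) 1, ⟪(θ : E), e⟫ ^ 2 * f (‖v‖ * ⟪(θ : E), e⟫) ∂volume.toSphere := by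
  have hdir : ‖‖v‖⁻¹ • v‖ = 1 := norm_smul_inv_norm hv
  have hscale (θ : E) : f ⟪θ, v⟫ = f (‖v‖ * ⟪θ, ‖v‖⁻¹ • v⟫) := by
    rw [real_inner_smul_right, mul_inv_cancel_left₀ (norm_ne_zero_iff.2 hv)]
  simp only [hscale] at hf ⊢
  rw [integral_toSphere_inner_mul_inner_mul_comp_inner hE hdir (f := fun s ↦ f (‖v‖ * s)) hf,
    integral_toSphere_comp_inner_eq_of_norm_eq (hdir.trans he.symm) fun s ↦ f (‖v‖ * s),
    integral_toSphere_comp_inner_eq_of_norm_eq (hdir.trans he.symm)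
      fun s ↦ s ^ 2 * f (‖v‖ * s)]

end SphereMoment

lemma real_inner_eq_sum_mul {ι : Type*} [Fintype ι] (x y : EuclideanSpace ℝ ι) :
    ⟪x, y⟫ = ∑ i, x i * y i := by
  simp only [PiLp.inner_apply, RCLike.inner_apply, conj_trivial, mul_comm]

/-- **Sphere integral of `(θ·x)(θ·x') exp(−γ(θ·(x−x'))²)` in terms of `J₁, J₂`.**
With `r = ‖x − x'‖` and `e = (x − x')/‖x − x'‖`, the integral equals
`(x·x' − (e·x)(e·x'))(J₁(γr²) − J₂(γr²))/(d−1) + (e·x)(e·x') J₂(γr²)`. -/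
theorem sphere_integral_projection_product
    (d : ℕ) (hd : 2 ≤ d) (γ : ℝ) (hγ : 0 < γ)
    (x x' : EuclideanSpace ℝ (Fin d)) (hxx : x ≠ x') :
    (∫ θ : Metric.sphere (0 : EuclideanSpace ℝ (Fin d)) 1,
        (∑ i, (θ : EuclideanSpace ℝ (Fin d)) i * x i)
          * (∑ i, (θ : EuclideanSpace ℝ (Fin d)) i * x' i)
          * Real.exp (-γ * (∑ i, (θ : EuclideanSpace ℝ (Fin d)) i * (x i - x' i)) ^ 2)
        ∂(sphereSurfaceMeasure d))
      = ((∑ i, x i * x' i)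
            - (∑ i, (‖x - x'‖⁻¹ • (x - x')) i * x i)
              * (∑ i, (‖x - x'‖⁻¹ • (x - x')) i * x' i))
          * ((J1 d hd (γ * ‖x - x'‖ ^ 2) - J2 d hd (γ * ‖x - x'‖ ^ 2)) / ((d : ℝ) - 1))
        + (∑ i, (‖x - x'‖⁻¹ • (x - x')) i * x i)
          * (∑ i, (‖x - x'‖⁻¹ • (x - x')) i * x' i)
          * J2 d hd (γ * ‖x - x'‖ ^ 2) := by
  have h := sphere_integral_projection_product_general (by rwa [finrank_euclideanSpace_fin])
    (sub_ne_zero.2 hxx) (e := EuclideanSpace.single ⟨0, by omega⟩ 1) (by simp)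
    (f := fun s ↦ exp (-γ * s ^ 2))
    (Continuous.integrable_of_hasCompactSupport (by fun_prop) (.of_compactSpace _)) x x'
  simp only [EuclideanSpace.inner_single_right, conj_trivial, one_mul, real_inner_eq_sum_mul,
    PiLp.sub_apply, finrank_euclideanSpace_fin, mul_pow, ← mul_assoc] at h
  simpa only [J1, J2, sphereSurfaceMeasure, neg_mul, ← mul_assoc] using h
end

section
/- Let d ≥ 2, γ > 0, and let σ_{d−1} denote the surface measure on the unit sphere S^{d−1} ⊂ ℝ^d. Then for every δ ∈ ℝ^d, ∫_{S^{d−1}} (θ·δ)² exp(−γ (θ·δ)²) dσ_{d−1}(θ) = ‖δ‖² · (π^{d/2} / Γ(d/2 + 1)) · M(3/2; d/2 + 1; −γ‖δ‖²), where M(3/2; d/2+1; −c) = (Γ(d/2+1) / (Γ(3/2) Γ((d−1)/2))) ∫₀¹ t^{1/2} (1−t)^{(d−3)/2} e^{−ct} dt is Kummer's confluent hypergeometric function. -/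
/-!
For a unit vector `u`, integrating `⟪u, x⟫ ^ (2 * m) * exp (-‖x‖ ^ 2)` over `E` both in Cartesian
and in polar coordinates gives the moments of `⟪u, θ⟫ ^ 2` under the surface measure `σ` of the unit
sphere. They are those of `σ(S) • Beta(1/2, (n - 1)/2)`, where `n = dim E`, and by Weierstrass
approximation a finite measure on a compact interval is determined by its moments.

On the other side, `c ↦ M(a; b; -c)` is the Laplace transform of `Beta(a, b - a)`. The factor
`⟪u, θ⟫ ^ 2` of the integrand turns `Beta(1/2, (n - 1)/2)` into `n⁻¹ • Beta(3/2, (n - 1)/2)`, and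
`σ(S) / n = π ^ (n/2) / Γ(n/2 + 1)` is the volume of the unit ball.
-/

open MeasureTheory Real

/-- Kummer's confluent hypergeometric function at a negated argument:
`kummerM a b c = M(a; b; −c) = (Γ(b)/(Γ(a)Γ(b−a))) ∫₀¹ t^{a−1}(1−t)^{b−a−1} e^{−ct} dt`
(Euler integral representation, valid for `b > a > 0`). -/
noncomputable def kummerM (a b c : ℝ) : ℝ :=
  (Real.Gamma b / (Real.Gamma a * Real.Gamma (b - a)))
    * ∫ t in (0 : ℝ)..1, t ^ (a - 1) * (1 - t) ^ (b - a - 1) * Real.exp (-c * t)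

section Moments

open Set Polynomial

variable {μ ν : Measure ℝ} [IsFiniteMeasure μ] [IsFiniteMeasure ν] {a b : ℝ}

theorem integrable_of_continuous_of_ae_mem_Icc (hμ : ∀ᵐ x ∂μ, x ∈ Icc a b) {f : ℝ → ℝ}
    (hf : Continuous f) : Integrable f μ := by
  obtain ⟨C, hC⟩ := isCompact_Icc.exists_bound_of_continuousOn (s := Icc a b) hf.continuousOn
  exact .of_bound hf.aestronglyMeasurable C (hμ.mono hC)

theorem integral_polynomial_eq_sum_mul_integral_pow (hμ : ∀ᵐ x ∂μ, x ∈ Icc a b) (p : ℝ[X]) :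
    ∫ x, p.eval x ∂μ = ∑ n ∈ p.support, p.coeff n * ∫ x, x ^ n ∂μ := by
  simp only [p.eval_eq_sum, Polynomial.sum_def]
  rw [integral_finsetSum _ fun n _ ↦ integrable_of_continuous_of_ae_mem_Icc hμ (by fun_prop)]
  simp only [integral_const_mul]

theorem abs_integral_sub_integral_le (hμ : ∀ᵐ x ∂μ, x ∈ Icc a b) {f g : ℝ → ℝ}
    (hf : Continuous f) (hg : Continuous g) {ε : ℝ} (hfg : ∀ x ∈ Icc a b, |f x - g x| ≤ ε) :
    |∫ x, f x ∂μ - ∫ x, g x ∂μ| ≤ ε * μ.real univ := by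
  rw [← integral_sub (integrable_of_continuous_of_ae_mem_Icc hμ hf)
    (integrable_of_continuous_of_ae_mem_Icc hμ hg)]
  exact norm_integral_le_of_norm_le_const (f := fun x ↦ f x - g x) (hμ.mono hfg)

theorem measure_eq_of_forall_integral_pow_eq (hμ : ∀ᵐ x ∂μ, x ∈ Icc a b)
    (hν : ∀ᵐ x ∂ν, x ∈ Icc a b) (h : ∀ n : ℕ, ∫ x, x ^ n ∂μ = ∫ x, x ^ n ∂ν) : μ = ν := by
  refine ext_of_forall_integral_eq_of_IsFiniteMeasure fun f ↦ eq_of_abs_sub_eq_zero ?_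
  have near (ε : ℝ) (hε : 0 < ε) :
      |∫ x, f x ∂μ - ∫ x, f x ∂ν| ≤ ε * (μ.real univ + ν.real univ) := by
    obtain ⟨p, hp⟩ := exists_polynomial_near_of_continuousOn a b f f.continuous.continuousOn ε hε
    have hfp : ∀ x ∈ Icc a b, |f x - p.eval x| ≤ ε := fun x hx ↦ by
      rw [abs_sub_comm]; exact (hp x hx).le
    have hpμν : ∫ x, p.eval x ∂μ = ∫ x, p.eval x ∂ν := by
      simp only [integral_polynomial_eq_sum_mul_integral_pow hμ,
        integral_polynomial_eq_sum_mul_integral_pow hν, h]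
    calc |∫ x, f x ∂μ - ∫ x, f x ∂ν|
        ≤ |∫ x, f x ∂μ - ∫ x, p.eval x ∂μ| + |∫ x, f x ∂ν - ∫ x, p.eval x ∂ν| := by
          rw [hpμν, abs_sub_comm (∫ x, f x ∂ν)]; exact abs_sub_le ..
      _ ≤ ε * μ.real univ + ε * ν.real univ := by
          gcongr
          · exact abs_integral_sub_integral_le hμ f.continuous p.continuous hfp
          · exact abs_integral_sub_integral_le hν f.continuous p.continuous hfp
      _ = ε * (μ.real univ + ν.real univ) := by ring
  have lim : Filter.Tendsto (fun ε : ℝ ↦ ε * (μ.real univ + ν.real univ))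
      (nhdsWithin 0 (Ioi 0)) (nhds 0) := by
    have cont := continuous_mul_const (μ.real univ + ν.real univ)
    simpa using cont.continuousWithinAt (x := 0).tendsto
  exact (ge_of_tendsto lim (eventually_mem_nhdsWithin.mono near)).antisymm (abs_nonneg _)

end Moments

section Beta

open Set ProbabilityTheory

variable {a b : ℝ}

theorem measurable_betaPDF : Measurable (betaPDF a b) :=
  (measurable_betaPDFReal a b).ennreal_ofReal

theorem integral_betaMeasure (ha : 0 < a) (hb : 0 < b) (f : ℝ → ℝ) :
    ∫ t, f t ∂betaMeasure a b
      = (beta a b)⁻¹ * ∫ t in (0 : ℝ)..1, t ^ (a - 1) * (1 - t) ^ (b - 1) * f t := by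
  have pdf_nonneg (t : ℝ) : 0 ≤ betaPDFReal a b t := by
    by_cases ht : 0 < t ∧ t < 1
    · exact (betaPDFReal_pos ht.1 ht.2 ha hb).le
    · simp [betaPDFReal, ht]
  have pdf_smul (t : ℝ) : betaPDFReal a b t * f t = (Ioo 0 1).indicator
      (fun t ↦ (beta a b)⁻¹ * (t ^ (a - 1) * (1 - t) ^ (b - 1) * f t)) t := by
    by_cases ht : 0 < t ∧ t < 1 <;> simp [betaPDFReal, ht, mul_assoc]
  rw [betaMeasure, integral_withDensity_eq_integral_toReal_smul measurable_betaPDF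
    (.of_forall fun t ↦ by simp [betaPDF])]
  simp only [betaPDF, ENNReal.toReal_ofReal (pdf_nonneg _), smul_eq_mul, pdf_smul]
  rw [integral_indicator measurableSet_Ioo, integral_const_mul, ← integral_Ioc_eq_integral_Ioo,
    ← intervalIntegral.integral_of_le zero_le_one]

theorem ae_mem_Icc_betaMeasure : ∀ᵐ t ∂betaMeasure a b, t ∈ Icc (0 : ℝ) 1 := by
  rw [betaMeasure, ae_withDensity_iff measurable_betaPDF]
  refine .of_forall fun t ht ↦ ?_
  contrapose! ht
  rcases le_or_gt 0 t with h0 | h0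
  · exact betaPDF_eq_zero_of_one_le (by by_contra h; exact ht ⟨h0, (not_le.1 h).le⟩)
  · exact betaPDF_eq_zero_of_nonpos h0.le

theorem integral_rpow_mul_betaMeasure {p : ℝ} (ha : 0 < a) (hb : 0 < b) (hap : 0 < a + p)
    (f : ℝ → ℝ) :
    ∫ t, t ^ p * f t ∂betaMeasure a b
      = beta (a + p) b / beta a b * ∫ t, f t ∂betaMeasure (a + p) b := by
  rw [integral_betaMeasure ha hb, integral_betaMeasure hap hb, ← mul_assoc,
    div_mul_eq_mul_div, mul_inv_cancel₀ (beta_pos hap hb).ne', one_div]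
  congr 1
  simp only [intervalIntegral.integral_of_le zero_le_one]
  refine setIntegral_congr_fun measurableSet_Ioc fun t ht ↦ ?_
  simp only [show a + p - 1 = a - 1 + p by ring, rpow_add ht.1]
  ring

theorem integral_pow_betaMeasure (ha : 0 < a) (hb : 0 < b) (n : ℕ) :
    ∫ t, t ^ n ∂betaMeasure a b = beta (a + n) b / beta a b := by
  have han : 0 < a + n := by positivity
  have := isProbabilityMeasureBeta han hb
  simpa using integral_rpow_mul_betaMeasure ha hb han fun _ ↦ 1

theorem beta_add_one_div_beta (ha : 0 < a) (hb : 0 < b) :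
    beta (a + 1) b / beta a b = a / (a + b) := by
  have hΓa := (Gamma_pos_of_pos ha).ne'
  have hΓb := (Gamma_pos_of_pos hb).ne'
  have hΓab := (Gamma_pos_of_pos (add_pos ha hb)).ne'
  simp only [beta, add_right_comm a 1 b]
  rw [Gamma_add_one ha.ne', Gamma_add_one (add_pos ha hb).ne']
  field_simp

theorem kummerM_eq_integral_betaMeasure (ha : 0 < a) (hab : a < b) (c : ℝ) :
    kummerM a b c = ∫ t, exp (-c * t) ∂betaMeasure a (b - a) := by
  rw [integral_betaMeasure ha (sub_pos.2 hab), kummerM, beta, inv_div, add_sub_cancel]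

theorem integral_mul_exp_betaMeasure (ha : 0 < a) (hb : 0 < b) (c : ℝ) :
    ∫ t, t * exp (-c * t) ∂betaMeasure a b = a / (a + b) * kummerM (a + 1) (a + b + 1) c := by
  have ha1 : 0 < a + 1 := add_pos ha one_pos
  simpa only [rpow_one, beta_add_one_div_beta ha hb, add_right_comm a b 1, add_sub_cancel_left,
    kummerM_eq_integral_betaMeasure ha1 (lt_add_of_pos_right (a + 1) hb)]
    using integral_rpow_mul_betaMeasure ha hb ha1 fun t ↦ exp (-c * t)

end Beta

section Gaussian

open Set

theorem integral_Ioi_pow_mul_exp_neg_sq (n : ℕ) :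
    ∫ r in Ioi (0 : ℝ), r ^ n * exp (-r ^ 2) = Gamma ((n + 1) / 2) / 2 := by
  have h := integral_rpow_mul_exp_neg_rpow (p := 2) (q := n) two_pos
    (neg_one_lt_zero.trans_le n.cast_nonneg)
  simp only [rpow_natCast, rpow_ofNat] at h
  rw [h, one_div_mul_eq_div]

theorem integral_even_pow_mul_exp_neg_sq (m : ℕ) :
    ∫ t : ℝ, t ^ (2 * m) * exp (-t ^ 2) = Gamma (m + 1 / 2) := by
  have habs := integral_comp_abs (f := fun t ↦ t ^ (2 * m) * exp (-t ^ 2))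
  simp only [(even_two_mul m).pow_abs, sq_abs] at habs
  rw [habs, integral_Ioi_pow_mul_exp_neg_sq, mul_div_cancel₀ _ two_ne_zero]
  push_cast
  ring_nf

variable {E ι : Type*} [NormedAddCommGroup E] [InnerProductSpace ℝ E] [FiniteDimensional ℝ E]
  [MeasurableSpace E] [BorelSpace E] [Fintype ι]

theorem integral_prod_comp_inner (e : OrthonormalBasis ι ℝ E) (f : ι → ℝ → ℝ) :
    ∫ x, ∏ i, f i (inner ℝ (e i) x) = ∏ i, ∫ t, f i t := by
  rw [← integral_fintype_prod_volume_eq_prod,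
    ← (PiLp.volume_preserving_ofLp ι).integral_comp
      (MeasurableEquiv.toLp 2 _).symm.measurableEmbedding,
    ← e.measurePreserving_repr.integral_comp e.repr.toHomeomorph.measurableEmbedding]
  simp only [e.repr_apply_apply]

theorem integral_prod_inner_even_pow_mul_exp_neg_norm_sq (e : OrthonormalBasis ι ℝ E) (k : ι → ℕ) :
    ∫ x, (∏ i, inner ℝ (e i) x ^ (2 * k i)) * exp (-‖x‖ ^ 2) = ∏ i, Gamma (k i + 1 / 2) := by
  have factor (x : E) : (∏ i, inner ℝ (e i) x ^ (2 * k i)) * exp (-‖x‖ ^ 2)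
      = ∏ i, inner ℝ (e i) x ^ (2 * k i) * exp (-inner ℝ (e i) x ^ 2) := by
    rw [Finset.prod_mul_distrib, ← exp_sum, Finset.sum_neg_distrib, ← e.sum_sq_inner_right]
  simp only [factor, ← integral_even_pow_mul_exp_neg_sq]
  exact integral_prod_comp_inner e fun i t ↦ t ^ (2 * k i) * exp (-t ^ 2)

end Gaussian

section Polar

open Set Module

variable {E : Type*} [NormedAddCommGroup E] [NormedSpace ℝ E] [FiniteDimensional ℝ E]
  [Nontrivial E] [MeasurableSpace E] [BorelSpace E]

theorem integral_volumeIoiPow (n : ℕ) (g : ℝ → ℝ) :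
    ∫ r : Ioi (0 : ℝ), g r ∂.volumeIoiPow n = ∫ r in Ioi (0 : ℝ), r ^ n * g r := by
  simp only [Measure.volumeIoiPow]
  rw [integral_withDensity_eq_integral_toReal_smul (by fun_prop)
      (.of_forall fun r ↦ ENNReal.ofReal_lt_top),
    integral_subtype_comap measurableSet_Ioi fun r : ℝ ↦ (ENNReal.ofReal (r ^ n)).toReal • g r]
  refine setIntegral_congr_fun measurableSet_Ioi fun r hr ↦ ?_
  simp only [ENNReal.toReal_ofReal (pow_nonneg (le_of_lt hr) n), smul_eq_mul]

theorem integral_fun_normalize_mul_fun_norm_addHaar (μ : Measure E) [μ.IsAddHaarMeasure]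
    (f : E → ℝ) (g : ℝ → ℝ) :
    ∫ x, f (‖x‖⁻¹ • x) * g ‖x‖ ∂μ
      = (∫ θ, f θ ∂μ.toSphere) * ∫ r in Ioi (0 : ℝ), r ^ (finrank ℝ E - 1) * g r := by
  calc ∫ x, f (‖x‖⁻¹ • x) * g ‖x‖ ∂μ
      = ∫ x : ({0}ᶜ : Set E), f (‖x.1‖⁻¹ • x.1) * g ‖x.1‖ ∂(μ.comap (↑)) := by
        rw [integral_subtype_comap (measurableSet_singleton 0).compl
          fun x ↦ f (‖x‖⁻¹ • x) * g ‖x‖, restrict_compl_singleton]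
    _ = ∫ z, f z.1 * g z.2 ∂(μ.toSphere.prod (.volumeIoiPow (finrank ℝ E - 1))) := by
        simpa using μ.measurePreserving_homeomorphUnitSphereProd.integral_comp
          (Homeomorph.measurableEmbedding _) fun z ↦ f z.1 * g z.2
    _ = (∫ θ, f θ ∂μ.toSphere) * ∫ r : Ioi (0 : ℝ), g r ∂.volumeIoiPow (finrank ℝ E - 1) :=
        integral_prod_mul (fun θ : Metric.sphere (0 : E) 1 ↦ f θ) fun r : Ioi (0 : ℝ) ↦ g r
    _ = _ := by rw [integral_volumeIoiPow]

theorem integral_homogeneous_mul_exp_neg_norm_sq (μ : Measure E) [μ.IsAddHaarMeasure] {f : E → ℝ}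
    {k : ℕ} (hf : ∀ r : ℝ, 0 < r → ∀ x, f (r • x) = r ^ k * f x) :
    ∫ x, f x * exp (-‖x‖ ^ 2) ∂μ
      = (∫ θ, f θ ∂μ.toSphere) * (Gamma ((k + finrank ℝ E) / 2) / 2) := by
  have normalize : ∀ᵐ x ∂μ,
      f x * exp (-‖x‖ ^ 2) = f (‖x‖⁻¹ • x) * (‖x‖ ^ k * exp (-‖x‖ ^ 2)) := by
    filter_upwards [compl_mem_ae_iff.2 (measure_singleton (0 : E))] with x hx
    have hx : 0 < ‖x‖ := norm_pos_iff.2 hx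
    rw [hf _ (inv_pos.2 hx), inv_pow]
    field_simp
  have radial : ∫ r in Ioi (0 : ℝ), r ^ (finrank ℝ E - 1) * (r ^ k * exp (-r ^ 2))
      = Gamma ((k + finrank ℝ E) / 2) / 2 := by
    simp only [← mul_assoc, ← pow_add]
    rw [integral_Ioi_pow_mul_exp_neg_sq, ← Nat.cast_add_one, ← Nat.cast_add,
      add_right_comm, Nat.sub_add_cancel finrank_pos, add_comm]
  rw [integral_congr_ae normalize, integral_fun_normalize_mul_fun_norm_addHaar μ f
    fun r ↦ r ^ k * exp (-r ^ 2), radial]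

end Polar

section Sphere

open Set ProbabilityTheory Module

variable {E : Type*} [NormedAddCommGroup E] [InnerProductSpace ℝ E]

theorem inner_sq_mem_Icc {u : E} (hu : ‖u‖ = 1) (θ : Metric.sphere (0 : E) 1) :
    inner ℝ u (θ : E) ^ 2 ∈ Icc (0 : ℝ) 1 := by
  refine ⟨sq_nonneg _, (sq_le_one_iff_abs_le_one _).2 ?_⟩
  simpa [hu] using abs_real_inner_le_norm u (θ : E)

variable [FiniteDimensional ℝ E]

theorem exists_orthonormalBasis_apply_eq {u : E} (hu : ‖u‖ = 1) :
    ∃ (s : Finset E) (e : OrthonormalBasis s ℝ E) (i : s), e i = u := by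
  have hu' : Orthonormal ℝ ((↑) : ({u} : Set E) → E) := by
    simp [hu]
  obtain ⟨s, e, hus, he⟩ := hu'.exists_orthonormalBasis_extension
  exact ⟨s, e, ⟨u, hus rfl⟩, by rw [he]⟩

variable [MeasurableSpace E] [BorelSpace E]

theorem integral_toSphere_prod_inner_even_pow {ι : Type*} [Fintype ι] [Nontrivial E]
    (e : OrthonormalBasis ι ℝ E) (k : ι → ℕ) :
    ∫ θ : Metric.sphere (0 : E) 1, ∏ i, inner ℝ (e i) (θ : E) ^ (2 * k i) ∂volume.toSphere
      = 2 * (∏ i, Gamma (k i + 1 / 2)) / Gamma (∑ i, (k i : ℝ) + finrank ℝ E / 2) := by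
  have homogeneous (r : ℝ) (_ : 0 < r) (x : E) : ∏ i, inner ℝ (e i) (r • x) ^ (2 * k i)
      = r ^ (2 * ∑ i, k i) * ∏ i, inner ℝ (e i) x ^ (2 * k i) := by
    simp only [real_inner_smul_right, mul_pow, Finset.prod_mul_distrib,
      Finset.prod_pow_eq_pow_sum, Finset.mul_sum]
  have polar := integral_homogeneous_mul_exp_neg_norm_sq volume
    (f := fun x ↦ ∏ i, inner ℝ (e i) x ^ (2 * k i)) homogeneous
  have hΓ : 0 < Gamma (∑ i, (k i : ℝ) + finrank ℝ E / 2) :=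
    Gamma_pos_of_pos (by have : 0 < finrank ℝ E := finrank_pos; positivity)
  rw [integral_prod_inner_even_pow_mul_exp_neg_norm_sq] at polar
  rw [Nat.cast_mul, Nat.cast_ofNat, add_div, mul_div_cancel_left₀ _ two_ne_zero,
    Nat.cast_sum] at polar
  rw [eq_div_iff hΓ.ne', polar]
  ring

theorem toSphere_volume_real_univ [Nontrivial E] :
    (volume : Measure E).toSphere.real univ = 2 * √π ^ finrank ℝ E / Gamma (finrank ℝ E / 2) := by
  simpa [-one_div, -Measure.toSphere_real_apply_univ, Gamma_one_half_eq] using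
    integral_toSphere_prod_inner_even_pow (stdOrthonormalBasis ℝ E) fun _ ↦ 0

theorem toSphere_volume_real_univ_div_finrank [Nontrivial E] :
    (volume : Measure E).toSphere.real univ / finrank ℝ E
      = π ^ ((finrank ℝ E : ℝ) / 2) / Gamma (finrank ℝ E / 2 + 1) := by
  have hE : (0 : ℝ) < finrank ℝ E := mod_cast finrank_pos
  rw [toSphere_volume_real_univ, Gamma_add_one (by positivity), sqrt_eq_rpow, ← rpow_natCast,
    ← rpow_mul pi_pos.le, one_div_mul_eq_div]
  field_simp

theorem integral_toSphere_inner_even_pow {u : E} (hu : ‖u‖ = 1) (m : ℕ) :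
    ∫ θ : Metric.sphere (0 : E) 1, inner ℝ u (θ : E) ^ (2 * m) ∂volume.toSphere
      = 2 * √π ^ (finrank ℝ E - 1) * Gamma (m + 1 / 2) / Gamma (m + finrank ℝ E / 2) := by
  classical
  have : Nontrivial E := ⟨u, 0, norm_ne_zero_iff.1 (hu ▸ one_ne_zero)⟩
  obtain ⟨s, e, i, rfl⟩ := exists_orthonormalBasis_apply_eq hu
  have integrand (x : E) : ∏ j, inner ℝ (e j) x ^ (2 * (Pi.single i m : s → ℕ) j)
      = inner ℝ (e i) x ^ (2 * m) := by
    rw [Fintype.prod_eq_single i fun j hj ↦ by simp [hj], Pi.single_eq_same]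
  have constant : ∏ j, Gamma ((Pi.single i m : s → ℕ) j + 1 / 2)
      = √π ^ (finrank ℝ E - 1) * Gamma (m + 1 / 2) := by
    rw [← Finset.prod_erase_mul _ _ (Finset.mem_univ i), Pi.single_eq_same,
      Finset.prod_congr rfl fun j hj ↦ by
        rw [Pi.single_eq_of_ne (Finset.ne_of_mem_erase hj), Nat.cast_zero, zero_add,
          Gamma_one_half_eq],
      Finset.prod_const, Finset.card_erase_of_mem (Finset.mem_univ i), Finset.card_univ,
      finrank_eq_card_basis e.toBasis]
  have h := integral_toSphere_prod_inner_even_pow e (Pi.single i m)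
  simp only [integrand, constant, ← Nat.cast_sum, Fintype.sum_pi_single'] at h
  rw [h, mul_assoc]

theorem integral_toSphere_inner_even_pow_eq_beta (hE : 2 ≤ finrank ℝ E) {u : E} (hu : ‖u‖ = 1)
    (m : ℕ) :
    ∫ θ : Metric.sphere (0 : E) 1, inner ℝ u (θ : E) ^ (2 * m) ∂volume.toSphere
      = (volume : Measure E).toSphere.real univ
        * (beta (1 / 2 + m) ((finrank ℝ E - 1) / 2) / beta (1 / 2) ((finrank ℝ E - 1) / 2)) := by
  have : Nontrivial E := nontrivial_of_finrank_pos (R := ℝ) (by omega)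
  have hE' : (2 : ℝ) ≤ finrank ℝ E := mod_cast hE
  have hΓ := (Gamma_pos_of_pos (show 0 < ((finrank ℝ E : ℝ) - 1) / 2 by linarith)).ne'
  have hΓ' := (Gamma_pos_of_pos (show 0 < (finrank ℝ E : ℝ) / 2 by linarith)).ne'
  have hpow : √π ^ finrank ℝ E = √π ^ (finrank ℝ E - 1) * √π := by
    rw [← pow_succ, Nat.sub_add_cancel (by omega)]
  rw [integral_toSphere_inner_even_pow hu, toSphere_volume_real_univ, hpow, beta, beta,
    Gamma_one_half_eq,
    show 1 / 2 + (m : ℝ) + (finrank ℝ E - 1) / 2 = m + finrank ℝ E / 2 by ring,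
    show (1 / 2 : ℝ) + (finrank ℝ E - 1) / 2 = finrank ℝ E / 2 by ring, add_comm (1 / 2 : ℝ)]
  field_simp

theorem map_inner_sq_toSphere (hE : 2 ≤ finrank ℝ E) {u : E} (hu : ‖u‖ = 1) :
    (volume : Measure E).toSphere.map (fun θ : Metric.sphere (0 : E) 1 ↦ inner ℝ u (θ : E) ^ 2)
      = (volume : Measure E).toSphere univ • betaMeasure (1 / 2) ((finrank ℝ E - 1) / 2) := by
  have hb : 0 < ((finrank ℝ E : ℝ) - 1) / 2 := by
    have : (2 : ℝ) ≤ finrank ℝ E := mod_cast hE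
    linarith
  have := isProbabilityMeasureBeta one_half_pos hb
  have hmeas : Measurable fun θ : Metric.sphere (0 : E) 1 ↦ inner ℝ u (θ : E) ^ 2 := by fun_prop
  have : IsFiniteMeasure ((volume : Measure E).toSphere univ •
    betaMeasure (1 / 2) (((finrank ℝ E : ℝ) - 1) / 2)) := Measure.smul_finite _ (measure_ne_top _ _)
  refine measure_eq_of_forall_integral_pow_eq (a := 0) (b := 1) ?_ ?_ fun m ↦ ?_
  · exact (ae_map_iff hmeas.aemeasurable measurableSet_Icc).2 (.of_forall (inner_sq_mem_Icc hu))
  · exact Measure.ae_smul_measure ae_mem_Icc_betaMeasure _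
  · rw [integral_map hmeas.aemeasurable (by fun_prop), integral_smul_measure,
      integral_pow_betaMeasure one_half_pos hb, smul_eq_mul]
    simp only [← pow_mul]
    exact integral_toSphere_inner_even_pow_eq_beta hE hu m

theorem integral_toSphere_comp_inner_sq (hE : 2 ≤ finrank ℝ E) (δ : E) {f : ℝ → ℝ}
    (hf : Measurable f) :
    ∫ θ : Metric.sphere (0 : E) 1, f (inner ℝ δ (θ : E) ^ 2) ∂volume.toSphere
      = (volume : Measure E).toSphere.real univ
        * ∫ t, f (‖δ‖ ^ 2 * t) ∂betaMeasure (1 / 2) ((finrank ℝ E - 1) / 2) := by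
  have : Nontrivial E := nontrivial_of_finrank_pos (R := ℝ) (by omega)
  obtain ⟨u, hu, hδ⟩ : ∃ u : E, ‖u‖ = 1 ∧ δ = ‖δ‖ • u := by
    rcases eq_or_ne δ 0 with rfl | hδ
    · obtain ⟨u, hu⟩ := exists_norm_eq E zero_le_one
      exact ⟨u, hu, by simp⟩
    · exact ⟨‖δ‖⁻¹ • δ, norm_smul_inv_norm hδ, by simp [hδ]⟩
  have hinner (x : E) : inner ℝ δ x ^ 2 = ‖δ‖ ^ 2 * inner ℝ u x ^ 2 := by
    conv_lhs => rw [hδ, real_inner_smul_left, mul_pow]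
  simp only [hinner]
  rw [← integral_map (φ := fun θ : Metric.sphere (0 : E) 1 ↦ inner ℝ u (θ : E) ^ 2)
    (f := fun t ↦ f (‖δ‖ ^ 2 * t)) (by fun_prop)
    (hf.comp (measurable_const_mul _)).aestronglyMeasurable, map_inner_sq_toSphere hE hu,
    integral_smul_measure, smul_eq_mul, measureReal_def]

theorem sphere_integral_sq_projection_general (hE : 2 ≤ finrank ℝ E) (γ : ℝ) (δ : E) :
    ∫ θ : Metric.sphere (0 : E) 1, inner ℝ δ (θ : E) ^ 2 * exp (-γ * inner ℝ δ (θ : E) ^ 2)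
        ∂volume.toSphere
      = ‖δ‖ ^ 2 * (π ^ ((finrank ℝ E : ℝ) / 2) / Gamma (finrank ℝ E / 2 + 1))
        * kummerM (3 / 2) (finrank ℝ E / 2 + 1) (γ * ‖δ‖ ^ 2) := by
  have : Nontrivial E := nontrivial_of_finrank_pos (R := ℝ) (by omega)
  have hE' : (2 : ℝ) ≤ finrank ℝ E := mod_cast hE
  have hb : 0 < ((finrank ℝ E : ℝ) - 1) / 2 := by linarith
  have integrand (t : ℝ) : ‖δ‖ ^ 2 * t * exp (-γ * (‖δ‖ ^ 2 * t))
      = ‖δ‖ ^ 2 * (t * exp (-(γ * ‖δ‖ ^ 2) * t)) := by ring_nf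
  rw [integral_toSphere_comp_inner_sq hE δ (f := fun s ↦ s * exp (-γ * s)) (by fun_prop)]
  simp only [integrand]
  rw [integral_const_mul, integral_mul_exp_betaMeasure one_half_pos hb,
    ← toSphere_volume_real_univ_div_finrank]
  ring_nf

end Sphere

/-- **Sphere integral of `(θ·δ)² exp(−γ(θ·δ)²)`.**
For every `δ ∈ ℝ^d`,
`∫_{S^{d−1}} (θ·δ)² e^{−γ(θ·δ)²} dσ_{d−1}(θ)
  = ‖δ‖² (π^{d/2}/Γ(d/2+1)) M(3/2; d/2+1; −γ‖δ‖²)`. -/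
theorem sphere_integral_sq_projection
    (d : ℕ) (hd : 2 ≤ d) (γ : ℝ) (hγ : 0 < γ) (δ : EuclideanSpace ℝ (Fin d)) :
    (∫ θ : Metric.sphere (0 : EuclideanSpace ℝ (Fin d)) 1,
        (∑ i, (θ : EuclideanSpace ℝ (Fin d)) i * δ i) ^ 2
          * Real.exp (-γ * (∑ i, (θ : EuclideanSpace ℝ (Fin d)) i * δ i) ^ 2)
        ∂(sphereSurfaceMeasure d))
      = ‖δ‖ ^ 2 * (Real.pi ^ ((d : ℝ) / 2) / Real.Gamma ((d : ℝ) / 2 + 1))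
          * kummerM (3 / 2) ((d : ℝ) / 2 + 1) (γ * ‖δ‖ ^ 2) := by
  simpa [PiLp.inner_apply, sphereSurfaceMeasure] using
    sphere_integral_sq_projection_general (by simpa using hd) γ δ
end
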